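/- arXiv:2406.08954 — 2 statements merged into one kernel-verified Lean document; each statement's English description precedes it below -/
import Mathlib

section
/- Let g : ℝᵈ → ℝ be 1-periodic in each coordinate and Lipschitz continuous with Lipschitz constant L. Then there exists a constant C > 0 depending only on d such that for every integer s ≥ 2 there is a real trigonometric polynomial g_s of degree ≤ s with g_s(ω) ≤ g(ω) for all ω ∈ ℝᵈ and ∫_{[0,1]^d} |g(ω) − g_s(ω)| dω ≤ C·L·(1 + ln s)/s. -/
open MeasureTheory

/-- `trigChar k z = exp(2πi⟨k, z⟩)`, the complex exponential with frequency `k ∈ ℤᵐ`. -/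
noncomputable def trigChar {m : ℕ} (k : Fin m → ℤ) (z : Fin m → ℝ) : ℂ :=
  Complex.exp (2 * (Real.pi : ℂ) * Complex.I * ∑ i, (k i : ℂ) * (z i : ℂ))

/-- `t : ℝᵐ → ℝ` is a real trigonometric polynomial of degree `≤ s`: a finite combination
`t(z) = Σ_{k ∈ ℤᵐ, ‖k‖_∞ ≤ s} c_k exp(2πi⟨k, z⟩)` that is real-valued (hence 1-periodic in
each coordinate). -/
def IsTrigPoly {m : ℕ} (s : ℕ) (t : (Fin m → ℝ) → ℝ) : Prop :=
  ∃ (S : Finset (Fin m → ℤ)) (c : (Fin m → ℤ) → ℂ),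
    (∀ k ∈ S, ∀ i, |k i| ≤ (s : ℤ)) ∧
    ∀ z, (t z : ℂ) = ∑ k ∈ S, c k * trigChar k z

/-- The one-dimensional character `x ↦ exp(2πimx)`. -/
noncomputable def expChar (m : ℤ) (x : ℝ) : ℂ :=
  Complex.exp (2 * (Real.pi : ℂ) * Complex.I * ((m : ℂ) * (x : ℂ)))

lemma expChar_add (m n : ℤ) (x : ℝ) : expChar (m + n) x = expChar m x * expChar n x := by
  unfold expChar
  rw [← Complex.exp_add]
  congr 1
  push_cast
  ring

lemma expChar_sub_right (m : ℤ) (x y : ℝ) :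
    expChar m (x - y) = expChar m (-y) * expChar m x := by
  unfold expChar
  rw [← Complex.exp_add]
  congr 1
  push_cast
  ring

lemma expChar_zero_left (x : ℝ) : expChar 0 x = 1 := by
  simp [expChar]

lemma conj_expChar (m : ℤ) (x : ℝ) : (starRingEnd ℂ) (expChar m x) = expChar (-m) x := by
  unfold expChar
  rw [← Complex.exp_conj]
  congr 1
  have h2 : (starRingEnd ℂ) 2 = 2 := Complex.conj_ofNat 2
  simp [Complex.conj_ofReal, h2]

lemma re_expChar_one (x : ℝ) : (expChar 1 x).re = Real.cos (2 * Real.pi * x) := by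
  have h : expChar 1 x = Complex.exp ((2 * Real.pi * x : ℝ) * Complex.I) := by
    unfold expChar
    congr 1
    push_cast
    ring
  rw [h, Complex.exp_ofReal_mul_I_re]

lemma prod_expChar {d : ℕ} (k : Fin d → ℤ) (z : Fin d → ℝ) :
    ∏ i, expChar (k i) (z i) = trigChar k z := by
  unfold expChar trigChar
  rw [← Complex.exp_sum, Finset.mul_sum]

/-- Sampling a character of frequency `|m| < N` at `N` equispaced points. -/
lemma sum_expChar_sub_div {N : ℕ} {m : ℤ} (hm : |m| < N) (x : ℝ) :
    ∑ j : Fin N, expChar m (x - (j : ℕ) / N) = if m = 0 then (N : ℂ) else 0 := by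
  have hN : 0 < N := by
    have := abs_nonneg m
    omega
  have hNc : (N : ℂ) ≠ 0 := by exact_mod_cast hN.ne'
  split_ifs with h
  · subst h
    simp [expChar_zero_left]
  · set ζ : ℂ := Complex.exp (2 * Real.pi * Complex.I * (-(m : ℂ) / N)) with hζ
    have hterm (j : Fin N) : expChar m (x - (j : ℕ) / N) = expChar m x * ζ ^ (j : ℕ) := by
      rw [hζ, ← Complex.exp_nat_mul]
      unfold expChar
      rw [← Complex.exp_add]
      congr 1
      push_cast
      ring
    have h1 : ζ ^ N = 1 := by
      rw [hζ, ← Complex.exp_nat_mul, Complex.exp_eq_one_iff]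
      refine ⟨-m, ?_⟩
      push_cast
      field_simp
    have h2 : ζ ≠ 1 := by
      rw [hζ, Ne, Complex.exp_eq_one_iff]
      rintro ⟨q, hq⟩
      have h3 : (-(m : ℂ) / N) = q := by
        have h4 := Complex.two_pi_I_ne_zero
        apply mul_left_cancel₀ h4
        rw [hq]
        ring
      rw [div_eq_iff hNc] at h3
      have h5 : -m = q * N := by exact_mod_cast h3
      have h6 : (N : ℤ) ∣ m := ⟨-q, by linarith⟩
      exact h (Int.eq_zero_of_abs_lt_dvd h6 hm)
    have h3 := mul_geom_sum ζ N
    rw [h1, sub_self] at h3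
    have h4 : ∑ j ∈ Finset.range N, ζ ^ j = 0 :=
      (mul_eq_zero.mp h3).resolve_left (sub_ne_zero.mpr h2)
    simp_rw [hterm]
    rw [← Finset.mul_sum, Fin.sum_univ_eq_sum_range (fun j => ζ ^ j), h4, mul_zero]

lemma sum_sin_mul_sin_succ {n : ℕ} (hn : 0 < n) :
    ∑ k ∈ Finset.range n, Real.sin (k * (Real.pi / n)) * Real.sin ((k + 1 : ℕ) * (Real.pi / n)) =
      Real.cos (Real.pi / n) * ∑ k ∈ Finset.range n, Real.sin (k * (Real.pi / n)) ^ 2 := by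
  set θ := Real.pi / n with hθ
  have hnθ : (n : ℝ) * θ = Real.pi := by
    have : (n : ℝ) ≠ 0 := by exact_mod_cast hn.ne'
    rw [hθ]
    field_simp
  have hshift : ∑ k ∈ Finset.range n, Real.sin (k * θ) * Real.sin ((k - 1 : ℝ) * θ) =
      ∑ k ∈ Finset.range n, Real.sin (k * θ) * Real.sin ((k + 1 : ℕ) * θ) := by
    obtain ⟨m, rfl⟩ : ∃ m, n = m + 1 := ⟨n - 1, by omega⟩
    rw [Finset.sum_range_succ', Finset.sum_range_succ _ m, hnθ]
    simp [mul_comm]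
  have hsum : ∑ k ∈ Finset.range n, Real.sin (k * θ) * Real.sin ((k + 1 : ℕ) * θ) +
      ∑ k ∈ Finset.range n, Real.sin (k * θ) * Real.sin ((k - 1 : ℝ) * θ) =
      2 * (Real.cos θ * ∑ k ∈ Finset.range n, Real.sin (k * θ) ^ 2) := by
    rw [← Finset.sum_add_distrib, Finset.mul_sum, Finset.mul_sum]
    refine Finset.sum_congr rfl fun k _ => ?_
    push_cast
    rw [add_mul, sub_mul, one_mul, Real.sin_add, Real.sin_sub]
    ring
  linarith

lemma normSq_sum_expChar (n : ℕ) (a : ℕ → ℝ) (x : ℝ) :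
    ((Complex.normSq (∑ k ∈ Finset.range n, (a k : ℂ) * expChar k x) : ℝ) : ℂ) =
      ∑ p ∈ Finset.range n ×ˢ Finset.range n,
        ((a p.1 * a p.2 : ℝ) : ℂ) * expChar ((p.1 : ℤ) - p.2) x := by
  rw [← Complex.mul_conj, map_sum, Finset.sum_mul_sum, Finset.sum_product]
  refine Finset.sum_congr rfl fun k _ => Finset.sum_congr rfl fun l _ => ?_
  rw [map_mul, conj_expChar, Complex.conj_ofReal, sub_eq_add_neg, expChar_add]
  push_cast
  ring

/-- The `r`-th Fourier coefficient of the squared modulus of a trigonometric polynomial, computed by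
sampling at equispaced points. -/
lemma sum_expChar_mul_normSq {n : ℕ} (a : ℕ → ℝ) (r : ℤ) (hr : 0 ≤ r) (hrn : r ≤ n) (x : ℝ) :
    ∑ j : Fin (2 * n), expChar r (x - (j : ℕ) / (2 * n : ℕ)) *
      ((Complex.normSq (∑ k ∈ Finset.range n,
        (a k : ℂ) * expChar k (x - (j : ℕ) / (2 * n : ℕ))) : ℝ) : ℂ) =
      (2 * n : ℕ) * ∑ p ∈ Finset.range n ×ˢ Finset.range n,
        if (p.2 : ℤ) = p.1 + r then ((a p.1 * a p.2 : ℝ) : ℂ) else 0 := by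
  simp_rw [normSq_sum_expChar, Finset.mul_sum]
  rw [Finset.sum_comm]
  refine Finset.sum_congr rfl fun p hp => ?_
  rw [Finset.mem_product, Finset.mem_range, Finset.mem_range] at hp
  have hlt : |(p.1 : ℤ) - p.2 + r| < (2 * n : ℕ) := by
    rw [abs_lt]
    push_cast
    constructor <;> omega
  have h := sum_expChar_sub_div hlt x
  calc _ = ((a p.1 * a p.2 : ℝ) : ℂ) *
        ∑ j : Fin (2 * n), expChar ((p.1 : ℤ) - p.2 + r) (x - (j : ℕ) / (2 * n : ℕ)) := by
        rw [Finset.mul_sum]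
        refine Finset.sum_congr rfl fun j _ => ?_
        rw [expChar_add]
        ring
    _ = _ := by
        rw [h]
        by_cases hc : (p.2 : ℤ) = p.1 + r
        · rw [if_pos hc, if_pos (by omega)]
          ring
        · rw [if_neg hc, if_neg (by omega)]
          ring

/-- A nonnegative trigonometric kernel of degree `≤ s` (of Fejér–Korovkin type), whose translates
by `j / (2s)` form a partition of unity with second moment of order `s⁻²`. -/
lemma exists_kernel {s : ℕ} (hs : 2 ≤ s) :
    ∃ (K : ℝ → ℝ) (κ : ℤ → ℂ),
      (∀ x, (K x : ℂ) = ∑ m ∈ Finset.Icc (-(s : ℤ)) s, κ m * expChar m x) ∧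
      (∀ x, 0 ≤ K x) ∧
      (∀ x, ∑ j : Fin (2 * s), K (x - (j : ℕ) / (2 * s : ℕ)) = 1) ∧
      ∀ x, ∑ j : Fin (2 * s), Real.cos (2 * Real.pi * (x - (j : ℕ) / (2 * s : ℕ))) *
        K (x - (j : ℕ) / (2 * s : ℕ)) = Real.cos (Real.pi / s) := by
  have hs0 : 0 < s := by omega
  have hsR : (0 : ℝ) < s := by exact_mod_cast hs0
  set a : ℕ → ℝ := fun k => Real.sin (k * (Real.pi / s)) with ha
  set A : ℝ := ∑ k ∈ Finset.range s, a k ^ 2 with hA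
  have hApos : 0 < A := by
    refine Finset.sum_pos' (fun _ _ => sq_nonneg _) ⟨1, Finset.mem_range.mpr (by omega), ?_⟩
    have : 0 < a 1 := by
      simp only [ha, Nat.cast_one, one_mul]
      refine Real.sin_pos_of_pos_of_lt_pi (by positivity) ?_
      refine div_lt_self Real.pi_pos ?_
      exact_mod_cast (by omega : 1 < s)
    positivity
  set M : ℝ := (2 * s : ℕ) * A with hM
  have hMpos : 0 < M := by
    rw [hM]
    push_cast
    positivity
  have hMc : (M : ℂ) ≠ 0 := by exact_mod_cast hMpos.ne'
  set P : ℝ → ℝ := fun x => Complex.normSq (∑ k ∈ Finset.range s, (a k : ℂ) * expChar k x) with hP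
  have hsum (r : ℤ) (hr : 0 ≤ r) (hrs : r ≤ s) (x : ℝ) :
      ∑ j : Fin (2 * s), expChar r (x - (j : ℕ) / (2 * s : ℕ)) *
        (P (x - (j : ℕ) / (2 * s : ℕ)) : ℂ) = _ := sum_expChar_mul_normSq a r hr hrs x
  refine ⟨fun x => P x / M, fun m => ∑ p ∈ Finset.range s ×ˢ Finset.range s with
      (p.1 : ℤ) - p.2 = m, ((a p.1 * a p.2 : ℝ) : ℂ) / M, fun x => ?_,
      fun x => div_nonneg (Complex.normSq_nonneg _) hMpos.le, fun x => ?_, fun x => ?_⟩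
  · have hmaps : ∀ p ∈ Finset.range s ×ˢ Finset.range s,
        (p.1 : ℤ) - p.2 ∈ Finset.Icc (-(s : ℤ)) s := by
      intro p hp
      rw [Finset.mem_product, Finset.mem_range, Finset.mem_range] at hp
      rw [Finset.mem_Icc]
      omega
    rw [Complex.ofReal_div, hP, normSq_sum_expChar,
      ← Finset.sum_fiberwise_of_maps_to hmaps, Finset.sum_div]
    refine Finset.sum_congr rfl fun m _ => ?_
    rw [Finset.sum_div, Finset.sum_mul]
    refine Finset.sum_congr rfl fun p hp => ?_
    rw [(Finset.mem_filter.mp hp).2]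
    ring
  · have h := hsum 0 le_rfl (by omega) x
    simp only [expChar_zero_left, one_mul, add_zero] at h
    rw [← Finset.sum_div, div_eq_one_iff_eq hMpos.ne', ← Complex.ofReal_inj, Complex.ofReal_sum, h,
      hM, hA, Complex.ofReal_mul, Complex.ofReal_natCast, Complex.ofReal_sum, Finset.sum_product]
    congr 1
    refine Finset.sum_congr rfl fun k hk => ?_
    simp only [Nat.cast_inj]
    rw [Finset.sum_ite_eq', if_pos hk, sq]
  · have h := hsum 1 zero_le_one (by omega) x
    have hre : ∑ j : Fin (2 * s), Real.cos (2 * Real.pi * (x - (j : ℕ) / (2 * s : ℕ))) *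
        P (x - (j : ℕ) / (2 * s : ℕ)) =
        (2 * s : ℕ) * ∑ k ∈ Finset.range s, a k * a (k + 1) := by
      have h2 := congrArg Complex.re h
      rw [Complex.re_sum] at h2
      simp only [Complex.re_mul_ofReal, re_expChar_one] at h2
      rw [h2, ← Complex.ofReal_natCast, Complex.re_ofReal_mul, Finset.sum_product, Complex.re_sum]
      congr 1
      refine Finset.sum_congr rfl fun k hk => ?_
      have hiff (l : ℕ) : ((l : ℤ) = k + 1) ↔ l = k + 1 := by omega
      simp only [hiff]
      rw [Finset.sum_ite_eq']
      split_ifs with hmem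
      · exact Complex.ofReal_re _
      · have hk1 : k + 1 = s := by
          rw [Finset.mem_range] at hk hmem
          omega
        have : a (k + 1) = 0 := by
          simp only [ha, hk1]
          rw [mul_div_cancel₀ _ hsR.ne', Real.sin_pi]
        simp [this]
    simp_rw [← mul_div_assoc]
    rw [← Finset.sum_div, hre, div_eq_iff hMpos.ne', hM, ha, sum_sin_mul_sin_succ hs0]
    ring

lemma abs_sub_round_le {δ : ℝ} (hδ : 0 < δ) (x : ℝ) :
    |x - round x| ≤ δ / 2 + (1 - Real.cos (2 * Real.pi * x)) / (16 * δ) := by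
  set y := x - round x with hy
  have hy2 : |y| ≤ 1 / 2 := abs_sub_round x
  have hcos : Real.cos (2 * Real.pi * x) = Real.cos (2 * Real.pi * y) := by
    rw [hy, mul_sub, mul_comm (2 * Real.pi) (round x : ℝ), Real.cos_sub_int_mul_two_pi]
  have hle : |2 * Real.pi * y| ≤ Real.pi := by
    rw [abs_mul, abs_of_pos Real.two_pi_pos]
    nlinarith [Real.pi_pos]
  have h := Real.cos_le_one_sub_mul_cos_sq hle
  have h2 : 2 / Real.pi ^ 2 * (2 * Real.pi * y) ^ 2 = 8 * |y| ^ 2 := by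
    rw [sq_abs]
    field_simp
    ring
  rw [h2] at h
  rw [hcos]
  have h3 : 8 * |y| ^ 2 / (16 * δ) ≤ (1 - Real.cos (2 * Real.pi * y)) / (16 * δ) := by
    gcongr
    linarith
  have h4 : |y| ≤ δ / 2 + 8 * |y| ^ 2 / (16 * δ) := by
    rw [← sub_nonneg]
    have : δ / 2 + 8 * |y| ^ 2 / (16 * δ) - |y| = (δ - |y|) ^ 2 / (2 * δ) := by
      field_simp
      ring
    rw [this]
    positivity
  linarith

lemma sum_abs_sub_round_mul_le {s : ℕ} (hs : 0 < s) {K : ℝ → ℝ} (hK : ∀ x, 0 ≤ K x)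
    (h1 : ∀ x, ∑ j : Fin (2 * s), K (x - (j : ℕ) / (2 * s : ℕ)) = 1)
    (hcos : ∀ x, ∑ j : Fin (2 * s), Real.cos (2 * Real.pi * (x - (j : ℕ) / (2 * s : ℕ))) *
        K (x - (j : ℕ) / (2 * s : ℕ)) = Real.cos (Real.pi / s)) (x : ℝ) :
    ∑ j : Fin (2 * s), |(x - (j : ℕ) / (2 * s : ℕ)) - round (x - (j : ℕ) / (2 * s : ℕ))| *
      K (x - (j : ℕ) / (2 * s : ℕ)) ≤ 1 / s := by
  have hsR : (0 : ℝ) < s := by exact_mod_cast hs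
  have hδ : (0 : ℝ) < 1 / s := by positivity
  calc _ ≤ ∑ j : Fin (2 * s), ((1 / s / 2 + 1 / (16 * (1 / s))) * K (x - (j : ℕ) / (2 * s : ℕ)) -
          1 / (16 * (1 / s)) * (Real.cos (2 * Real.pi * (x - (j : ℕ) / (2 * s : ℕ))) *
            K (x - (j : ℕ) / (2 * s : ℕ)))) := by
        refine Finset.sum_le_sum fun j _ => ?_
        refine (mul_le_mul_of_nonneg_right (abs_sub_round_le hδ _) (hK _)).trans_eq ?_
        ring
    _ = 1 / s / 2 + s / 16 * (1 - Real.cos (Real.pi / s)) := by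
        rw [Finset.sum_sub_distrib, ← Finset.mul_sum, ← Finset.mul_sum, h1, hcos]
        field_simp
        ring
    _ ≤ 1 / s / 2 + s / 16 * ((Real.pi / s) ^ 2 / 2) := by
        gcongr
        linarith [Real.one_sub_sq_div_two_le_cos (x := Real.pi / s)]
    _ ≤ 1 / s := by
        have hpi : Real.pi ^ 2 ≤ 16 := by nlinarith [Real.pi_le_four, Real.pi_pos]
        have : (s : ℝ) / 16 * ((Real.pi / s) ^ 2 / 2) = Real.pi ^ 2 / 32 * (1 / s) := by
          field_simp
          norm_num
        rw [this]
        nlinarith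

lemma periodic_intCast {d : ℕ} {g : (Fin d → ℝ) → ℝ}
    (hg : ∀ (z : Fin d → ℝ) (i : Fin d), g (Function.update z i (z i + 1)) = g z)
    (n : Fin d → ℤ) : Function.Periodic g (fun i => (n i : ℝ)) := by
  have h1 (i : Fin d) : Function.Periodic g (Pi.single i 1) := by
    intro z
    rw [← hg z i]
    congr 1
    ext l
    by_cases h : l = i
    · subst h
      simp
    · simp [h]
  have h2 (S : Finset (Fin d)) : Function.Periodic g (∑ i ∈ S, n i • Pi.single i (1 : ℝ)) := by
    induction S using Finset.induction_on with
    | empty => intro z; simp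
    | insert i S hi ih =>
      rw [Finset.sum_insert hi]
      exact ((h1 i).zsmul (n i)).add_period ih
  have h3 : (fun i => (n i : ℝ)) = ∑ i, n i • Pi.single i (1 : ℝ) := by
    ext l
    simp [Finset.sum_apply, Pi.single_apply]
  rw [h3]
  exact h2 _

lemma abs_sub_le_sum_abs_sub_round {d : ℕ} {g : (Fin d → ℝ) → ℝ} {L : NNReal}
    (hg : ∀ (z : Fin d → ℝ) (i : Fin d), g (Function.update z i (z i + 1)) = g z)
    (hL : LipschitzWith L g) (y z : Fin d → ℝ) :
    |g y - g z| ≤ L * ∑ i, |(z i - y i) - round (z i - y i)| := by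
  rw [← periodic_intCast hg (fun i => round (z i - y i)) y, ← Real.dist_eq]
  refine (hL.dist_le_mul _ _).trans ?_
  gcongr
  rw [dist_pi_le_iff (Finset.sum_nonneg fun _ _ => abs_nonneg _)]
  intro i
  refine le_trans (le_of_eq ?_) (Finset.single_le_sum
    (f := fun i => |(z i - y i) - round (z i - y i)|) (fun _ _ => abs_nonneg _)
    (Finset.mem_univ i))
  rw [Real.dist_eq, abs_sub_comm, Pi.add_apply]
  congr 1
  ring

lemma isTrigPoly_sum_prod {d s : ℕ} {ι : Type*} [Fintype ι] {K : ℝ → ℝ} {κ : ℤ → ℂ}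
    (hK : ∀ x, (K x : ℂ) = ∑ m ∈ Finset.Icc (-(s : ℤ)) s, κ m * expChar m x)
    (b : ι → ℝ) (y : ι → Fin d → ℝ) :
    IsTrigPoly s (fun z : Fin d → ℝ => ∑ j, b j * ∏ i, K (z i - y j i)) := by
  refine ⟨Fintype.piFinset fun _ => Finset.Icc (-(s : ℤ)) s,
    fun k => ∑ j, b j * ∏ i, (κ (k i) * expChar (k i) (-y j i)), fun k hk i => ?_, fun z => ?_⟩
  · rw [abs_le, ← Finset.mem_Icc]
    exact Fintype.mem_piFinset.mp hk i
  · simp_rw [Complex.ofReal_sum, Complex.ofReal_mul, Complex.ofReal_prod, hK,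
      Finset.prod_univ_sum, Finset.mul_sum, Finset.sum_mul]
    rw [Finset.sum_comm]
    refine Finset.sum_congr rfl fun k _ => Finset.sum_congr rfl fun j _ => ?_
    rw [← prod_expChar, mul_assoc, ← Finset.prod_mul_distrib]
    congr 1
    refine Finset.prod_congr rfl fun i _ => ?_
    rw [expChar_sub_right, mul_assoc]

lemma sum_mul_prod_eq {d : ℕ} {ι : Type*} [Fintype ι] (w : Fin d → ι → ℝ) (f : ι → ℝ)
    (hw : ∀ i, ∑ j, w i j = 1) (l : Fin d) :
    ∑ j : Fin d → ι, f (j l) * ∏ i, w i (j i) = ∑ j, f j * w l j := by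
  have h (j : Fin d → ι) : f (j l) * ∏ i, w i (j i) =
      ∏ i, (if i = l then f (j i) else 1) * w i (j i) := by
    rw [Finset.prod_mul_distrib, Finset.prod_ite_eq' Finset.univ l (fun i => f (j i)),
      if_pos (Finset.mem_univ l)]
  simp_rw [h]
  rw [← Fintype.prod_sum (fun i j => (if i = l then f j else 1) * w i j),
    Finset.prod_eq_single l]
  · simp
  · intro i _ hi
    simp [hi, hw]
  · simp

/-- Jackson's theorem for periodic Lipschitz functions, with an arbitrary additive shift `b` of
the approximating polynomial. -/
lemma exists_isTrigPoly_abs_add_sub_le {d : ℕ} {g : (Fin d → ℝ) → ℝ} {L : NNReal}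
    (hg : ∀ (z : Fin d → ℝ) (i : Fin d), g (Function.update z i (z i + 1)) = g z)
    (hL : LipschitzWith L g) {s : ℕ} (hs : 2 ≤ s) (b : ℝ) :
    ∃ t : (Fin d → ℝ) → ℝ, IsTrigPoly s t ∧ ∀ z, |t z - (g z + b)| ≤ L * (d / s) := by
  obtain ⟨K, κ, hκ, hK, h1, hcos⟩ := exists_kernel hs
  set y : (Fin d → Fin (2 * s)) → Fin d → ℝ := fun j i => ((j i : ℕ) : ℝ) / (2 * s : ℕ) with hy
  refine ⟨_, isTrigPoly_sum_prod hκ (fun j => g (y j) + b) y, fun z => ?_⟩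
  have hW : ∑ j, ∏ i, K (z i - y j i) = 1 := by
    have := Fintype.prod_sum (fun (i : Fin d) (j : Fin (2 * s)) =>
      K (z i - ((j : ℕ) : ℝ) / (2 * s : ℕ)))
    simp only [h1, Finset.prod_const_one] at this
    exact this.symm
  have hW0 (j : Fin d → Fin (2 * s)) : 0 ≤ ∏ i, K (z i - y j i) :=
    Finset.prod_nonneg fun _ _ => hK _
  have hdiff : ∑ j, (g (y j) + b) * ∏ i, K (z i - y j i) - (g z + b) =
      ∑ j, (g (y j) - g z) * ∏ i, K (z i - y j i) := by
    rw [← mul_one (g z + b), ← hW, Finset.mul_sum, ← Finset.sum_sub_distrib]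
    exact Finset.sum_congr rfl fun j _ => by ring
  calc |∑ j, (g (y j) + b) * ∏ i, K (z i - y j i) - (g z + b)|
      ≤ ∑ j, |(g (y j) - g z) * ∏ i, K (z i - y j i)| := by
        rw [hdiff]
        exact Finset.abs_sum_le_sum_abs _ _
    _ ≤ ∑ j, (L * ∑ l, |(z l - y j l) - round (z l - y j l)|) * ∏ i, K (z i - y j i) := by
        refine Finset.sum_le_sum fun j _ => ?_
        rw [abs_mul, abs_of_nonneg (hW0 j)]
        exact mul_le_mul_of_nonneg_right (abs_sub_le_sum_abs_sub_round hg hL _ _) (hW0 j)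
    _ = L * ∑ l, ∑ j, |(z l - y j l) - round (z l - y j l)| * ∏ i, K (z i - y j i) := by
        rw [Finset.sum_comm, Finset.mul_sum]
        exact Finset.sum_congr rfl fun j _ => by rw [mul_assoc, Finset.sum_mul]
    _ ≤ L * ∑ _l : Fin d, 1 / (s : ℝ) := by
        gcongr with l
        refine le_of_eq_of_le (sum_mul_prod_eq
          (fun i (j : Fin (2 * s)) => K (z i - ((j : ℕ) : ℝ) / (2 * s : ℕ)))
          (fun j => |(z l - ((j : ℕ) : ℝ) / (2 * s : ℕ)) -
            round (z l - ((j : ℕ) : ℝ) / (2 * s : ℕ))|) (fun i => h1 (z i)) l)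
          (sum_abs_sub_round_mul_le (by omega) hK h1 hcos (z l))
    _ = L * (d / s) := by
        simp [div_eq_mul_inv]

/-- one-sided trigonometric approximation of Lipschitz periodic functions.
For every dimension `d` there is a constant `C > 0` such that: for every `g : ℝᵈ → ℝ`
1-periodic in each coordinate and Lipschitz with constant `L`, and every integer `s ≥ 2`,
there is a real trigonometric polynomial `g_s` of degree `≤ s` with `g_s ≤ g` everywhere and
`∫_{[0,1]^d} |g − g_s| ≤ C·L·(1 + ln s)/s`. -/
theorem lipschitz_one_sided_trig_approx (d : ℕ) :
    ∃ C : ℝ, 0 < C ∧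
      ∀ (g : (Fin d → ℝ) → ℝ) (L : NNReal),
        (∀ (z : Fin d → ℝ) (i : Fin d), g (Function.update z i (z i + 1)) = g z) →
        LipschitzWith L g →
        ∀ s : ℕ, 2 ≤ s →
          ∃ gs : (Fin d → ℝ) → ℝ, IsTrigPoly s gs ∧ (∀ ω, gs ω ≤ g ω) ∧
            ∫ ω in Set.Icc (0 : Fin d → ℝ) 1, |g ω - gs ω| ≤
              C * (L : ℝ) * (1 + Real.log s) / s := by
  refine ⟨2 * d + 1, by positivity, fun g L hg hL s hs => ?_⟩
  have hsR : (1 : ℝ) ≤ s := by exact_mod_cast (by omega : 1 ≤ s)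
  obtain ⟨t, ht, hbound⟩ := exists_isTrigPoly_abs_add_sub_le hg hL hs (-(L * (d / s)))
  refine ⟨t, ht, fun ω => by linarith [(abs_le.mp (hbound ω)).2], ?_⟩
  have hle : ∀ ω ∈ Set.Icc (0 : Fin d → ℝ) 1, ‖|g ω - t ω|‖ ≤ 2 * (L * (d / s)) := by
    intro ω _
    have := abs_le.mp (hbound ω)
    rw [Real.norm_eq_abs, abs_abs, abs_le]
    have h0 : 0 ≤ (L : ℝ) * (d / s) := by positivity
    constructor <;> linarith
  have hvol : volume (Set.Icc (0 : Fin d → ℝ) 1) = 1 := by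
    simp [Real.volume_Icc_pi]
  have hint := norm_setIntegral_le_of_norm_le_const (by rw [hvol]; exact ENNReal.one_lt_top) hle
  rw [Measure.real, hvol, ENNReal.toReal_one, mul_one] at hint
  refine (le_abs_self _).trans (hint.trans ?_)
  have hlog : 0 ≤ Real.log s := Real.log_nonneg hsR
  calc 2 * (L * (d / s)) = (2 * d) * (L : ℝ) * 1 / s := by ring
    _ ≤ (2 * d + 1) * (L : ℝ) * (1 + Real.log s) / s := by
        gcongr <;> linarith
end

section
/- Let [a, b] ⊂ ℝ be a compact interval and let f : ℝⁿ × [a, b] → ℝ be such that for each ω, x ↦ f(x, ω) is a real trigonometric polynomial of degree ≤ 2r (1-periodic in each coordinate of x) whose Fourier coefficients are polynomial functions of ω. Set c*(ω) = inf_{x ∈ [0,1]ⁿ} f(x, ω). For an integer s_p ≥ 1 let ω_i = a + (i−1)(b−a)/s_p for i = 1, …, s_p (with ω_{s_p+1} = b), and for each i define c*_s(ω_i) = sup{ c ∈ ℝ : f(·, ω_i) − c is a finite sum of squares of real trigonometric polynomials of degree ≤ s on ℝⁿ }, and let c*_s : [a, b] → ℝ be the step function equal to c*_s(ω_i) on [ω_i,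 ω_{i+1}). Then there exists a constant C > 0 depending only on f such that for every integer s with s² > 6r²: ∫_a^b (c*(ω) − c*_s(ω)) dω ≤ max_i ‖f(·, ω_i) − f̄(·, ω_i)‖_F · [(1 − 6r²/s²)^{−n} − 1] · (b − a) + C/s_p. In particular, choosing s_p ≥ s² yields ∫_a^b (c*(ω) − c*_s(ω)) dω ≤ C′/s² for a constant C′ depending only on f, r, n and (b − a). -/
open MeasureTheory

/-- `fCoeff g k` is the `k`-th Fourier coefficient of the 1-periodic function `g : ℝⁿ → ℝ`. -/
noncomputable def fCoeff {m : ℕ} (g : (Fin m → ℝ) → ℝ) (k : Fin m → ℤ) : ℂ :=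
  ∫ z in Set.Icc (0 : Fin m → ℝ) 1, (g z : ℂ) * trigChar (-k) z

/-- `Fnorm g = Σ_k |ĝ(k)|`, the ℓ¹ norm of the Fourier coefficients of `g`. -/
noncomputable def Fnorm {m : ℕ} (g : (Fin m → ℝ) → ℝ) : ℝ :=
  ∑' k : Fin m → ℤ, ‖fCoeff g k‖

/-- `bestSOS n s g` is the best degree-`s` sum-of-squares lower bound for `g : ℝⁿ → ℝ`:
`sup { c ∈ ℝ : g − c` is a finite sum of squares of real trigonometric polynomials of
degree `≤ s }`. -/
noncomputable def bestSOS (n s : ℕ) (g : (Fin n → ℝ) → ℝ) : ℝ :=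
  sSup {c : ℝ | ∃ (K : ℕ) (h : Fin K → (Fin n → ℝ) → ℝ),
    (∀ k, IsTrigPoly s (h k)) ∧ ∀ x, g x - c = ∑ k, (h k x) ^ 2}

/-- `cstar n f ω = inf_{x ∈ [0,1]ⁿ} f(x, ω)`, the optimal lower-bounding function. -/
noncomputable def cstar (n : ℕ) (f : (Fin n → ℝ) → ℝ → ℝ) (ω : ℝ) : ℝ :=
  sInf ((fun x => f x ω) '' Set.Icc (0 : Fin n → ℝ) 1)

/-- `gridPt a b sp i = a + i·(b − a)/sp`, the `i`-th point of the equidistant grid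
`ω_1, …, ω_{sp}` on `[a, b]` (indexed here from `i = 0`). -/
noncomputable def gridPt (a b : ℝ) (sp i : ℕ) : ℝ := a + (i : ℝ) * (b - a) / sp

/-- The piecewise-constant lower-bounding function `c*_s`: on each grid cell
`[ω_i, ω_{i+1})` it takes the value `bestSOS` of `x ↦ f(x, ω_i)` at the left grid point. -/
noncomputable def stepSOS (n s : ℕ) (f : (Fin n → ℝ) → ℝ → ℝ) (a b : ℝ) (sp : ℕ)
    (ω : ℝ) : ℝ :=
  bestSOS n s (fun x => f x (gridPt a b sp (min ⌊(ω - a) * sp / (b - a)⌋₊ (sp - 1))))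


/-- The tent sequence `j ↦ max (s - |j|) 0`. -/
noncomputable def tent (s : ℕ) (j : ℤ) : ℝ := max ((s : ℝ) - |(j : ℝ)|) 0

lemma tent_nonneg (s : ℕ) (j : ℤ) : 0 ≤ tent s j := le_max_right _ _

lemma tent_le (s : ℕ) (j : ℤ) : tent s j ≤ s :=
  max_le (by linarith [abs_nonneg (j : ℝ)]) (Nat.cast_nonneg s)

lemma tent_neg (s : ℕ) (j : ℤ) : tent s (-j) = tent s j := by simp [tent]

lemma tent_eq_zero {s : ℕ} {j : ℤ} (hj : j ∉ Finset.Icc (-s : ℤ) s) : tent s j = 0 := by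
  have h : (s : ℤ) < |j| := by
    by_contra! h
    exact hj (Finset.mem_Icc.2 (abs_le.1 h))
  have h' : (s : ℝ) < |(j : ℝ)| := by exact_mod_cast h
  exact max_eq_right (by linarith)

/-- The tent is convex away from its apex, where its second difference is at least `-2`. -/
lemma tent_second_diff (s : ℕ) (m : ℤ) :
    (if m = 0 then -2 else 0 : ℝ) ≤ tent s (m + 1) - 2 * tent s m + tent s (m - 1) := by
  have h1 := le_max_left ((s : ℝ) - |((m + 1 : ℤ) : ℝ)|) 0
  have h1' := le_max_right ((s : ℝ) - |((m + 1 : ℤ) : ℝ)|) 0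
  have h2 := le_max_left ((s : ℝ) - |((m - 1 : ℤ) : ℝ)|) 0
  have h2' := le_max_right ((s : ℝ) - |((m - 1 : ℤ) : ℝ)|) 0
  unfold tent
  split_ifs with hm
  · subst hm
    norm_num at *
    rcases max_cases (s : ℝ) 0 with h | h <;> rcases max_cases ((s : ℝ) - 1) 0 with h' | h' <;>
      linarith
  · have h3 : |((m + 1 : ℤ) : ℝ)| + |((m - 1 : ℤ) : ℝ)| = 2 * |(m : ℝ)| := by
      norm_cast
      simp only [abs_eq_max_neg]
      omega
    rcases max_cases ((s : ℝ) - |(m : ℝ)|) 0 with h | h <;> linarith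

/-- The discrete self-convolution of the tent sequence. -/
noncomputable def tentConv (s : ℕ) (k : ℤ) : ℝ :=
  ∑ j ∈ Finset.Icc (-s : ℤ) s, tent s j * tent s (k - j)

lemma sum_Icc_neg {M : Type*} [AddCommMonoid M] (s : ℕ) (F : ℤ → M) :
    ∑ j ∈ Finset.Icc (-s : ℤ) s, F (-j) = ∑ j ∈ Finset.Icc (-s : ℤ) s, F j :=
  Finset.sum_nbij' (fun j => -j) (fun j => -j) (by intro j; simp; omega) (by intro j; simp; omega)
    (by simp) (by simp) (by simp)

lemma tentConv_neg (s : ℕ) (k : ℤ) : tentConv s (-k) = tentConv s k := by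
  unfold tentConv
  rw [← sum_Icc_neg]
  refine Finset.sum_congr rfl fun j _ => ?_
  rw [tent_neg, ← tent_neg s (-k - -j)]
  congr 2
  ring

lemma tentConv_second_diff (s : ℕ) (k : ℤ) :
    -2 * (s : ℝ) ≤ tentConv s (k + 1) - 2 * tentConv s k + tentConv s (k - 1) := by
  have h : tentConv s (k + 1) - 2 * tentConv s k + tentConv s (k - 1) =
      ∑ j ∈ Finset.Icc (-s : ℤ) s, tent s j *
        (tent s (k - j + 1) - 2 * tent s (k - j) + tent s (k - j - 1)) := by
    unfold tentConv
    rw [Finset.mul_sum, ← Finset.sum_sub_distrib, ← Finset.sum_add_distrib]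
    refine Finset.sum_congr rfl fun j _ => ?_
    rw [show k + 1 - j = k - j + 1 by ring, show k - 1 - j = k - j - 1 by ring]
    ring
  rw [h]
  calc -2 * (s : ℝ) ≤ ∑ j ∈ Finset.Icc (-s : ℤ) s, (if k = j then -2 * tent s j else 0) := by
        rw [Finset.sum_ite_eq]
        have := tent_le s k
        split_ifs
        · linarith
        · linarith [Nat.cast_nonneg (α := ℝ) s]
    _ ≤ _ := by
        refine Finset.sum_le_sum fun j _ => ?_
        have := mul_le_mul_of_nonneg_left (tent_second_diff s (k - j)) (tent_nonneg s j)
        simp only [sub_eq_zero] at this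
        refine le_trans (le_of_eq ?_) this
        split_ifs <;> ring

lemma tentConv_lower_nat (s k : ℕ) :
    tentConv s 0 - s * (k : ℝ) ^ 2 ≤ tentConv s k ∧
      -(s : ℝ) * (2 * k + 1) ≤ tentConv s (k + 1) - tentConv s k := by
  induction k with
  | zero =>
    have h := tentConv_second_diff s 0
    have h' := tentConv_neg s 1
    norm_num at *
    linarith
  | succ k ih =>
    have h := tentConv_second_diff s (k + 1)
    rw [show (k : ℤ) + 1 - 1 = k by ring] at h
    push_cast
    constructor
    · nlinarith [ih.1, ih.2]
    · nlinarith [ih.1, ih.2]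

lemma tentConv_lower (s : ℕ) (k : ℤ) : tentConv s 0 - s * (k : ℝ) ^ 2 ≤ tentConv s k := by
  rcases Int.eq_nat_or_neg k with ⟨m, rfl | rfl⟩
  · exact_mod_cast (tentConv_lower_nat s m).1
  · rw [tentConv_neg]
    simpa using (tentConv_lower_nat s m).1

lemma tentConv_zero (s : ℕ) : tentConv s 0 = ∑ j ∈ Finset.Icc (-s : ℤ) s, tent s j ^ 2 :=
  Finset.sum_congr rfl fun j _ => by rw [zero_sub, tent_neg, sq]

lemma tentConv_zero_lower (s : ℕ) : 2 / 3 * (s : ℝ) ^ 3 ≤ tentConv s 0 := by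
  have hsum (m : ℕ) : ∑ i ∈ Finset.range (m + 1), (i : ℝ) ^ 2 = m * (m + 1) * (2 * m + 1) / 6 := by
    induction m with
    | zero => simp
    | succ m ih => rw [Finset.sum_range_succ, ih]; push_cast; ring
  rw [tentConv_zero, Finset.sum_Icc_of_even_eq_range (fun j => by rw [tent_neg]),
    ← Finset.sum_range_reflect]
  have h : ∀ i ∈ Finset.range (s + 1), tent s ((s + 1 - 1 - i : ℕ) : ℤ) ^ 2 = (i : ℝ) ^ 2 := by
    intro i hi
    have hi' : i ≤ s := by simpa [Nat.lt_succ_iff] using hi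
    have : (0 : ℝ) ≤ s - i := sub_nonneg.2 (by exact_mod_cast hi')
    simp [tent, Nat.cast_sub hi', abs_of_nonneg this]
  rw [Finset.sum_congr rfl h, hsum]
  have h0 : tent s 0 = s := by simp [tent]
  rw [h0, nsmul_eq_mul]
  push_cast
  nlinarith [Nat.cast_nonneg (α := ℝ) s]

lemma tentConv_le_zero (s : ℕ) (k : ℤ) : tentConv s k ≤ tentConv s 0 := by
  have h : ∑ j ∈ Finset.Icc (-s : ℤ) s, tent s (k - j) ^ 2 ≤ tentConv s 0 := by
    rw [tentConv_zero]
    have : ∑ j ∈ Finset.Icc (-s : ℤ) s, tent s (k - j) ^ 2 =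
        ∑ j ∈ (Finset.Icc (-s : ℤ) s).map (Equiv.subLeft k).toEmbedding, tent s j ^ 2 := by
      simp
    rw [this, ← Finset.sum_filter_ne_zero]
    refine Finset.sum_le_sum_of_subset_of_nonneg (fun j hj => ?_) fun j _ _ => sq_nonneg _
    by_contra hj'
    exact (Finset.mem_filter.1 hj).2 (by rw [tent_eq_zero hj']; simp)
  have h' : tentConv s k ≤
      ∑ j ∈ Finset.Icc (-s : ℤ) s, (tent s j ^ 2 + tent s (k - j) ^ 2) / 2 :=
    Finset.sum_le_sum fun j _ => by nlinarith [sq_nonneg (tent s j - tent s (k - j))]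
  rw [← Finset.sum_div, Finset.sum_add_distrib, ← tentConv_zero] at h'
  linarith

lemma tentConv_ratio_lower {r s : ℕ} (hs : 0 < s) {k : ℤ} (hk : |k| ≤ 2 * r) :
    (1 - 6 * (r : ℝ) ^ 2 / (s : ℝ) ^ 2) ≤ tentConv s k / tentConv s 0 := by
  have hs' : (0 : ℝ) < s := by exact_mod_cast hs
  have h0 := tentConv_zero_lower s
  have hpos : 0 < tentConv s 0 := lt_of_lt_of_le (by positivity) h0
  have hk' : (k : ℝ) ^ 2 ≤ (2 * r) ^ 2 := by
    have : |(k : ℝ)| ≤ 2 * r := by exact_mod_cast hk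
    exact sq_le_sq' (by linarith [(abs_le.1 this).1]) (abs_le.1 this).2
  rw [le_div_iff₀ hpos]
  refine le_trans ?_ (tentConv_lower s k)
  have h1 : (s : ℝ) * k ^ 2 ≤ s * (2 * r) ^ 2 := mul_le_mul_of_nonneg_left hk' hs'.le
  have h2 : 6 * (r : ℝ) ^ 2 / s ^ 2 * (2 / 3 * s ^ 3) ≤ 6 * (r : ℝ) ^ 2 / s ^ 2 * tentConv s 0 :=
    mul_le_mul_of_nonneg_left h0 (by positivity)
  have h3 : 6 * (r : ℝ) ^ 2 / s ^ 2 * (2 / 3 * s ^ 3) = s * (2 * r) ^ 2 := by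
    field_simp
    ring
  linarith

/-- The trigonometric polynomial on `ℝ` whose Fourier coefficients form the tent sequence. -/
noncomputable def tentPoly (s : ℕ) (t : ℝ) : ℝ :=
  ∑ j ∈ Finset.Icc (-s : ℤ) s, tent s j * Real.cos (2 * Real.pi * (j * t))

lemma ofReal_tentPoly (s : ℕ) (t : ℝ) :
    (tentPoly s t : ℂ) = ∑ j ∈ Finset.Icc (-s : ℤ) s,
      (tent s j : ℂ) * Complex.exp (2 * Real.pi * Complex.I * (j * t)) := by
  have h : ∑ j ∈ Finset.Icc (-s : ℤ) s,
      (tent s j : ℂ) * Complex.exp (2 * Real.pi * Complex.I * (j * t)) =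
      ∑ j ∈ Finset.Icc (-s : ℤ) s,
      (tent s j : ℂ) * Complex.exp (-(2 * Real.pi * Complex.I * (j * t))) := by
    rw [← sum_Icc_neg]
    refine Finset.sum_congr rfl fun j _ => ?_
    rw [tent_neg]
    push_cast
    congr 2
    ring
  have h2 : (2 : ℂ) * tentPoly s t = 2 * ∑ j ∈ Finset.Icc (-s : ℤ) s,
      (tent s j : ℂ) * Complex.exp (2 * Real.pi * Complex.I * (j * t)) := by
    rw [two_mul (∑ j ∈ _, _)]
    nth_rewrite 2 [h]
    rw [← Finset.sum_add_distrib, tentPoly]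
    push_cast
    rw [Finset.mul_sum]
    refine Finset.sum_congr rfl fun j _ => ?_
    rw [← mul_add, mul_left_comm, Complex.two_cos]
    congr 3 <;> ring_nf
  exact mul_left_cancel₀ two_ne_zero h2

/-- Orthogonality of characters on the grid of `N` equidistant points. -/
lemma sum_exp_grid {N : ℕ} (hN : 0 < N) {m : ℤ} (hm : |m| < N) :
    ∑ y : Fin N, Complex.exp (2 * Real.pi * Complex.I * (m * ((y : ℝ) / N : ℝ))) =
      if m = 0 then (N : ℂ) else 0 := by
  have hN' : (N : ℂ) ≠ 0 := by exact_mod_cast hN.ne'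
  split_ifs with h
  · simp [h]
  · have hpow (y : ℕ) : Complex.exp (2 * Real.pi * Complex.I * (m * ((y : ℝ) / N : ℝ))) =
        Complex.exp (2 * Real.pi * Complex.I * (m / N)) ^ y := by
      rw [← Complex.exp_nat_mul]
      push_cast
      congr 1
      ring
    rw [Fin.sum_univ_eq_sum_range
      (fun y => Complex.exp (2 * Real.pi * Complex.I * (m * ((y : ℝ) / N : ℝ)))) N]
    simp only [hpow]
    have hne : Complex.exp (2 * Real.pi * Complex.I * (m / N)) ≠ 1 := by
      rw [Ne, Complex.exp_eq_one_iff]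
      rintro ⟨q, hq⟩
      have h2 : (m : ℂ) / N = q :=
        mul_left_cancel₀ Complex.two_pi_I_ne_zero (by rw [hq]; ring)
      rw [div_eq_iff hN'] at h2
      have h3 : m = q * N := by exact_mod_cast h2
      exact h (Int.eq_zero_of_abs_lt_dvd ⟨q, by rw [h3, mul_comm]⟩ hm)
    rw [geom_sum_eq hne, ← Complex.exp_nat_mul]
    have : Complex.exp (N * (2 * Real.pi * Complex.I * (m / N))) = 1 :=
      Complex.exp_eq_one_iff.2 ⟨m, by field_simp⟩
    rw [this]
    simp

lemma sum_tentPoly_sq_mul_exp {s N : ℕ} {k : ℤ} (hN : 2 * s + |k| < N) (x : ℝ) :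
    ∑ y : Fin N, (tentPoly s (x - (y : ℝ) / N) : ℂ) ^ 2 *
        Complex.exp (2 * Real.pi * Complex.I * (k * ((y : ℝ) / N : ℝ))) =
      N * tentConv s k * Complex.exp (2 * Real.pi * Complex.I * (k * x)) := by
  have hN0 : 0 < N := by have := abs_nonneg k; omega
  have expand (y : Fin N) : (tentPoly s (x - (y : ℝ) / N) : ℂ) ^ 2 *
        Complex.exp (2 * Real.pi * Complex.I * (k * ((y : ℝ) / N : ℝ))) =
      ∑ j ∈ Finset.Icc (-s : ℤ) s, ∑ j' ∈ Finset.Icc (-s : ℤ) s,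
        (tent s j * tent s j' * Complex.exp (2 * Real.pi * Complex.I * ((j + j') * x))) *
        Complex.exp (2 * Real.pi * Complex.I * ((k - j - j' : ℤ) * ((y : ℝ) / N : ℝ))) := by
    rw [sq, ofReal_tentPoly, Finset.sum_mul_sum, Finset.sum_mul]
    refine Finset.sum_congr rfl fun j _ => ?_
    rw [Finset.sum_mul]
    refine Finset.sum_congr rfl fun j' _ => ?_
    rw [mul_mul_mul_comm, mul_assoc, mul_assoc ((tent s j : ℂ) * tent s j'), ← Complex.exp_add,
      ← Complex.exp_add, ← Complex.exp_add]
    push_cast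
    congr 2
    ring
  simp only [expand]
  rw [Finset.sum_comm]
  have inner : ∀ j ∈ Finset.Icc (-s : ℤ) s, ∑ y : Fin N, ∑ j' ∈ Finset.Icc (-s : ℤ) s,
        (tent s j * tent s j' * Complex.exp (2 * Real.pi * Complex.I * ((j + j') * x))) *
        Complex.exp (2 * Real.pi * Complex.I * ((k - j - j' : ℤ) * ((y : ℝ) / N : ℝ))) =
      N * (tent s j * tent s (k - j) : ℝ) *
        Complex.exp (2 * Real.pi * Complex.I * (k * x)) := by
    intro j hj
    rw [Finset.sum_comm]
    have : ∀ j' ∈ Finset.Icc (-s : ℤ) s, ∑ y : Fin N,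
        (tent s j * tent s j' * Complex.exp (2 * Real.pi * Complex.I * ((j + j') * x))) *
        Complex.exp (2 * Real.pi * Complex.I * ((k - j - j' : ℤ) * ((y : ℝ) / N : ℝ))) =
        if k - j = j' then N * (tent s j * tent s (k - j) : ℝ) *
        Complex.exp (2 * Real.pi * Complex.I * (k * x)) else 0 := by
      intro j' hj'
      rw [← Finset.mul_sum, sum_exp_grid hN0]
      · simp only [sub_eq_zero (a := k - j)]
        split_ifs with h
        · subst h
          push_cast
          rw [add_sub_cancel]
          ring
        · simp
      · rw [Finset.mem_Icc] at hj hj'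
        have := abs_le.1 (le_refl |k|)
        rw [abs_lt]
        constructor <;> linarith
    rw [Finset.sum_congr rfl this, Finset.sum_ite_eq]
    split_ifs with h
    · rfl
    · rw [tent_eq_zero h]
      simp
  rw [Finset.sum_congr rfl inner, tentConv]
  push_cast
  rw [Finset.mul_sum, Finset.sum_mul]

lemma trigChar_eq_prod {n : ℕ} (k : Fin n → ℤ) (z : Fin n → ℝ) :
    trigChar k z = ∏ i, Complex.exp (2 * Real.pi * Complex.I * (k i * z i)) := by
  rw [trigChar, Finset.mul_sum, Complex.exp_sum]

lemma norm_trigChar {n : ℕ} (k : Fin n → ℤ) (z : Fin n → ℝ) : ‖trigChar k z‖ = 1 := by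
  rw [trigChar, Complex.norm_exp]
  simp [Complex.mul_re, Complex.mul_im]

lemma trigChar_sub {n : ℕ} (k : Fin n → ℤ) (x y : Fin n → ℝ) :
    trigChar k (x - y) = trigChar k (-y) * trigChar k x := by
  simp only [trigChar, ← Complex.exp_add, ← mul_add, ← Finset.sum_add_distrib]
  congr 2
  refine Finset.sum_congr rfl fun i _ => ?_
  simp only [Pi.sub_apply, Pi.neg_apply]
  push_cast
  ring

/-- The point of the grid `(ℤ / N)ⁿ ∩ [0, 1)ⁿ` with index `y`. -/
noncomputable def gridVec {n N : ℕ} (y : Fin n → Fin N) : Fin n → ℝ := fun i => (y i : ℝ) / N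

lemma gridVec_mem {n N : ℕ} (y : Fin n → Fin N) : gridVec y ∈ Set.Icc (0 : Fin n → ℝ) 1 := by
  refine ⟨fun i => div_nonneg (Nat.cast_nonneg _) (Nat.cast_nonneg _), fun i => ?_⟩
  exact div_le_one_of_le₀ (Nat.cast_le.2 (y i).2.le) (Nat.cast_nonneg _)

/-- Quadrature: averaging against the squared product kernel acts diagonally on characters. -/
lemma sum_prod_tentPoly_sq_mul_trigChar {n s N : ℕ} {k : Fin n → ℤ}
    (hN : ∀ i, 2 * s + |k i| < N) (x : Fin n → ℝ) :
    ∑ y : Fin n → Fin N,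
        ((∏ i, tentPoly s (x i - gridVec y i) : ℝ) : ℂ) ^ 2 * trigChar k (gridVec y) =
      N ^ n * (∏ i, tentConv s (k i) : ℝ) * trigChar k x := by
  calc _ = ∑ y : Fin n → Fin N, ∏ i, (tentPoly s (x i - (y i : ℝ) / N) : ℂ) ^ 2 *
        Complex.exp (2 * Real.pi * Complex.I * (k i * ((y i : ℝ) / N : ℝ))) := by
        refine Finset.sum_congr rfl fun y _ => ?_
        rw [trigChar_eq_prod, Finset.prod_mul_distrib, Finset.prod_pow]
        push_cast
        simp [gridVec]
    _ = ∏ i, ∑ y : Fin N, (tentPoly s (x i - (y : ℝ) / N) : ℂ) ^ 2 *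
        Complex.exp (2 * Real.pi * Complex.I * (k i * ((y : ℝ) / N : ℝ))) := by
        rw [Finset.prod_univ_sum, Fintype.piFinset_univ]
    _ = _ := by
        simp only [fun i => sum_tentPoly_sq_mul_exp (hN i) (x i), Finset.prod_mul_distrib]
        rw [trigChar_eq_prod]
        simp

lemma isTrigPoly_prod_tentPoly {n : ℕ} (s : ℕ) (a : ℝ) (y : Fin n → ℝ) :
    IsTrigPoly s (fun x => a * ∏ i, tentPoly s (x i - y i)) := by
  refine ⟨Fintype.piFinset fun _ => Finset.Icc (-s : ℤ) s,
    fun k => a * (∏ i, (tent s (k i) : ℂ)) * trigChar k (-y), fun k hk i => ?_, fun z => ?_⟩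
  · exact abs_le.2 (Finset.mem_Icc.1 (Fintype.mem_piFinset.1 hk i))
  · push_cast
    simp only [ofReal_tentPoly]
    rw [Finset.prod_univ_sum, Finset.mul_sum]
    refine Finset.sum_congr rfl fun k _ => ?_
    rw [mul_assoc _ (trigChar k (-y)), ← trigChar_sub, trigChar_eq_prod,
      Finset.prod_mul_distrib, mul_assoc (a : ℂ)]
    simp


/-- A trigonometric polynomial of degree `≤ 2r` exceeds its minimum, up to an explicit error, by a
sum of squares of trigonometric polynomials of degree `≤ s`. -/
theorem exists_sum_sq_eq_sub {n r s : ℕ} {g : (Fin n → ℝ) → ℝ} {S : Finset (Fin n → ℤ)}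
    {c : (Fin n → ℤ) → ℂ} (hS : ∀ k ∈ S, ∀ i, |k i| ≤ (2 * r : ℤ))
    (hg : ∀ x, (g x : ℂ) = ∑ k ∈ S, c k * trigChar k x) (hs : 6 * r ^ 2 < s ^ 2) {m : ℝ}
    (hm : ∀ x ∈ Set.Icc (0 : Fin n → ℝ) 1, m ≤ g x) :
    ∃ (K : ℕ) (h : Fin K → (Fin n → ℝ) → ℝ), (∀ k, IsTrigPoly s (h k)) ∧
      ∀ x, g x - (m - (∑ k ∈ S.erase 0, ‖c k‖) *
        ((1 - 6 * (r : ℝ) ^ 2 / (s : ℝ) ^ 2) ^ (-(n : ℤ)) - 1)) = ∑ k, (h k x) ^ 2 := by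
  have hs0 : 0 < s := Nat.pos_of_ne_zero (by rintro rfl; simp at hs)
  have hA : 0 < tentConv s 0 := by
    have : (0 : ℝ) < s := by exact_mod_cast hs0
    exact lt_of_lt_of_le (by positivity) (tentConv_zero_lower s)
  set δ : ℝ := 1 - 6 * (r : ℝ) ^ 2 / (s : ℝ) ^ 2 with hδ
  have hδ0 : 0 < δ := by
    have h1 : (0 : ℝ) < (s : ℝ) ^ 2 := by positivity
    have h2 : 6 * (r : ℝ) ^ 2 < (s : ℝ) ^ 2 := by exact_mod_cast hs
    rw [hδ, sub_pos, div_lt_one h1]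
    exact h2
  set c₀ : ℝ := m - (∑ k ∈ S.erase 0, ‖c k‖) * (δ ^ (-(n : ℤ)) - 1) with hc₀
  set Λ : (Fin n → ℤ) → ℝ := fun k => ∏ i, tentConv s (k i) / tentConv s 0 with hΛ
  have hΛ_lower : ∀ k ∈ S, δ ^ n ≤ Λ k := by
    intro k hk
    calc δ ^ n = ∏ _i : Fin n, δ := by simp
      _ ≤ _ := Finset.prod_le_prod (fun _ _ => hδ0.le)
        fun i _ => tentConv_ratio_lower hs0 (hS k hk i)
  have hΛ_pos : ∀ k ∈ S, 0 < Λ k := fun k hk => (pow_pos hδ0 n).trans_le (hΛ_lower k hk)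
  have hΛ_le : ∀ k ∈ S, Λ k ≤ 1 := fun k hk =>
    Finset.prod_le_one (fun i _ => hδ0.le.trans (tentConv_ratio_lower hs0 (hS k hk i)))
      fun i _ => (div_le_one hA).2 (tentConv_le_zero s (k i))
  have hΛ_zero : Λ 0 = 1 := by simp [hΛ, hA.ne']
  have hΛ_inv : ∀ k ∈ S, |(Λ k)⁻¹ - 1| ≤ δ ^ (-(n : ℤ)) - 1 := by
    intro k hk
    rw [abs_of_nonneg (sub_nonneg.2 ((one_le_inv₀ (hΛ_pos k hk)).2 (hΛ_le k hk))), zpow_neg,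
      zpow_natCast]
    exact sub_le_sub_right (inv_anti₀ (pow_pos hδ0 n) (hΛ_lower k hk)) 1
  set Z : (Fin n → ℝ) → ℂ := fun y => ∑ k ∈ S, c k * (Λ k : ℂ)⁻¹ * trigChar k y with hZ
  have hZ_lower : ∀ y ∈ Set.Icc (0 : Fin n → ℝ) 1, 0 ≤ (Z y).re - c₀ := by
    intro y hy
    have h1 : Z y - g y = ∑ k ∈ S, c k * ((Λ k)⁻¹ - 1 : ℝ) * trigChar k y := by
      rw [hg, hZ, ← Finset.sum_sub_distrib]
      refine Finset.sum_congr rfl fun k _ => ?_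
      push_cast
      ring
    have h2 : ‖Z y - g y‖ ≤ (∑ k ∈ S.erase 0, ‖c k‖) * (δ ^ (-(n : ℤ)) - 1) := by
      rw [h1, ← Finset.sum_erase (a := 0) S (by simp [hΛ_zero]), Finset.sum_mul]
      refine norm_sum_le_of_le _ fun k hk => ?_
      rw [norm_mul, norm_mul, norm_trigChar, mul_one, Complex.norm_real]
      exact mul_le_mul_of_nonneg_left (hΛ_inv k (Finset.mem_of_mem_erase hk)) (norm_nonneg _)
    have h3 := (abs_le.1 ((Complex.abs_re_le_norm _).trans h2)).1
    rw [Complex.sub_re, Complex.ofReal_re] at h3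
    linarith [hm y hy]
  set N : ℕ := 2 * s + 2 * r + 1 with hN
  have hN_lt : ∀ k ∈ S, ∀ i, 2 * (s : ℤ) + |k i| < N := by
    intro k hk i
    have := hS k hk i
    push_cast [hN]
    linarith
  set D : ℝ := N ^ n * tentConv s 0 ^ n with hD
  have hD0 : 0 < D := by positivity
  set q : (Fin n → Fin N) → (Fin n → ℝ) → ℝ := fun y x => ∏ i, tentPoly s (x i - gridVec y i)
    with hq
  have hZ_sum (x : Fin n → ℝ) : ∑ y, q y x ^ 2 * (Z (gridVec y)).re = D * g x := by
    have h : ∑ y, ((q y x ^ 2 : ℝ) : ℂ) * Z (gridVec y) = (D * g x : ℝ) := by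
      push_cast
      rw [hg]
      simp only [hZ, Finset.mul_sum]
      rw [Finset.sum_comm]
      refine Finset.sum_congr rfl fun k hk => ?_
      have := sum_prod_tentPoly_sq_mul_trigChar (hN_lt k hk) x
      calc _ = c k * (Λ k : ℂ)⁻¹ * ∑ y : Fin n → Fin N,
            ((q y x : ℝ) : ℂ) ^ 2 * trigChar k (gridVec y) := by
            rw [Finset.mul_sum]
            refine Finset.sum_congr rfl fun y _ => ?_
            ring
        _ = _ := by
            have hprod : ∏ i, tentConv s (k i) = Λ k * tentConv s 0 ^ n := by
              simp only [hΛ, Finset.prod_div_distrib, Finset.prod_const, Finset.card_univ,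
                Fintype.card_fin]
              rw [div_mul_cancel₀ _ (pow_pos hA n).ne']
            have hne : (Λ k : ℂ) ≠ 0 := by exact_mod_cast (hΛ_pos k hk).ne'
            simp only [hq]
            rw [this, hprod, hD]
            push_cast
            field_simp
    have h' := congrArg Complex.re h
    rw [Complex.re_sum, Complex.ofReal_re] at h'
    simpa only [Complex.re_ofReal_mul] using h'
  have hone_sum (x : Fin n → ℝ) : ∑ y, q y x ^ 2 = D := by
    have h := sum_prod_tentPoly_sq_mul_trigChar (n := n) (s := s) (N := N) (k := 0)
      (fun i => by simp [hN]) x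
    have h0 (z : Fin n → ℝ) : trigChar 0 z = 1 := by simp [trigChar]
    simp only [h0, mul_one, Pi.zero_apply, Finset.prod_const, Finset.card_univ,
      Fintype.card_fin] at h
    simp only [hq, hD]
    exact_mod_cast h
  let e := Fintype.equivFin (Fin n → Fin N)
  refine ⟨Fintype.card (Fin n → Fin N),
    fun i x => √(((Z (gridVec (e.symm i))).re - c₀) / D) * q (e.symm i) x,
    fun i => isTrigPoly_prod_tentPoly s _ _, fun x => ?_⟩
  rw [Equiv.sum_comp e.symm fun y => (√(((Z (gridVec y)).re - c₀) / D) * q y x) ^ 2]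
  have hterm (y : Fin n → Fin N) : (√(((Z (gridVec y)).re - c₀) / D) * q y x) ^ 2 =
      (q y x ^ 2 * (Z (gridVec y)).re - q y x ^ 2 * c₀) / D := by
    rw [mul_pow, Real.sq_sqrt (div_nonneg (hZ_lower _ (gridVec_mem y)) hD0.le)]
    ring
  simp only [hterm]
  rw [← Finset.sum_div, Finset.sum_sub_distrib, ← Finset.sum_mul, hZ_sum, hone_sum, ← mul_sub,
    mul_div_cancel_left₀ _ hD0.ne']

lemma integral_Icc_exp (m : ℤ) :
    ∫ t in Set.Icc (0 : ℝ) 1, Complex.exp (2 * Real.pi * Complex.I * (m * t)) =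
      if m = 0 then 1 else 0 := by
  rw [integral_Icc_eq_integral_Ioc, ← intervalIntegral.integral_of_le zero_le_one]
  split_ifs with h
  · simp [h]
  · have hm : (2 * Real.pi * Complex.I * m : ℂ) ≠ 0 :=
      mul_ne_zero Complex.two_pi_I_ne_zero (by exact_mod_cast h)
    simp only [← mul_assoc]
    rw [integral_exp_mul_complex hm]
    have : Complex.exp (2 * Real.pi * Complex.I * m) = 1 :=
      Complex.exp_eq_one_iff.2 ⟨m, by ring⟩
    simp [this]

lemma integral_trigChar {n : ℕ} (k : Fin n → ℤ) :
    ∫ z in Set.Icc (0 : Fin n → ℝ) 1, trigChar k z = if k = 0 then 1 else 0 := by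
  have hvol : (volume : Measure (Fin n → ℝ)).restrict (Set.Icc 0 1) =
      Measure.pi fun _ => volume.restrict (Set.Icc (0 : ℝ) 1) := by
    rw [← Set.pi_univ_Icc, volume_pi, Measure.restrict_pi_pi]
    rfl
  rw [hvol]
  simp only [trigChar_eq_prod]
  rw [integral_fintype_prod_eq_prod
    (fun i (t : ℝ) => Complex.exp (2 * Real.pi * Complex.I * (k i * t)))]
  simp only [integral_Icc_exp]
  split_ifs with h
  · simp [h]
  · obtain ⟨i, hi⟩ := Function.ne_iff.1 h
    exact Finset.prod_eq_zero (Finset.mem_univ i) (if_neg hi)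

lemma continuous_trigChar {n : ℕ} (k : Fin n → ℤ) : Continuous (trigChar k) := by
  unfold trigChar
  fun_prop

lemma fCoeff_eq {n : ℕ} {g : (Fin n → ℝ) → ℝ} {S : Finset (Fin n → ℤ)} {c : (Fin n → ℤ) → ℂ}
    (hg : ∀ x, (g x : ℂ) = ∑ k ∈ S, c k * trigChar k x) (k : Fin n → ℤ) :
    fCoeff g k = if k ∈ S then c k else 0 := by
  have h (z : Fin n → ℝ) : (g z : ℂ) * trigChar (-k) z = ∑ j ∈ S, c j * trigChar (j - k) z := by
    rw [hg, Finset.sum_mul]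
    refine Finset.sum_congr rfl fun j _ => ?_
    rw [mul_assoc]
    simp only [trigChar, ← Complex.exp_add, ← mul_add, ← Finset.sum_add_distrib]
    congr 3
    refine Finset.sum_congr rfl fun i _ => ?_
    simp only [Pi.sub_apply, Pi.neg_apply]
    push_cast
    ring
  simp only [fCoeff, h]
  rw [integral_finsetSum _ fun j _ => ((continuous_trigChar _).const_mul
    (c j)).continuousOn.integrableOn_compact isCompact_Icc]
  simp only [integral_const_mul, integral_trigChar, sub_eq_zero, mul_ite, mul_one, mul_zero]
  exact Finset.sum_ite_eq' S k c

lemma Fnorm_eq {n : ℕ} {g : (Fin n → ℝ) → ℝ} {S : Finset (Fin n → ℤ)} {c : (Fin n → ℤ) → ℂ}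
    (hg : ∀ x, (g x : ℂ) = ∑ k ∈ S, c k * trigChar k x) : Fnorm g = ∑ k ∈ S, ‖c k‖ := by
  simp only [Fnorm, fCoeff_eq hg]
  rw [tsum_eq_sum (s := S) fun k hk => by simp [hk]]
  exact Finset.sum_congr rfl fun k hk => by rw [if_pos hk]

lemma Fnorm_sub_integral {n : ℕ} {g : (Fin n → ℝ) → ℝ} {S : Finset (Fin n → ℤ)}
    {c : (Fin n → ℤ) → ℂ} (hg : ∀ x, (g x : ℂ) = ∑ k ∈ S, c k * trigChar k x) :
    Fnorm (fun x => g x - ∫ y in Set.Icc (0 : Fin n → ℝ) 1, g y) =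
      ∑ k ∈ S.erase 0, ‖c k‖ := by
  have h0 (z : Fin n → ℝ) : trigChar 0 z = 1 := by simp [trigChar]
  have hmean : ((∫ y in Set.Icc (0 : Fin n → ℝ) 1, g y : ℝ) : ℂ) = if 0 ∈ S then c 0 else 0 := by
    rw [← fCoeff_eq hg, fCoeff, ← integral_complex_ofReal]
    simp [h0]
  refine Fnorm_eq fun x => ?_
  push_cast
  rw [hmean, hg]
  split_ifs with h
  · rw [← Finset.add_sum_erase S _ h, h0]
    ring
  · rw [Finset.erase_eq_of_notMem h, sub_zero]


lemma le_bestSOS {n s : ℕ} {g : (Fin n → ℝ) → ℝ} {c : ℝ}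
    (h : ∃ (K : ℕ) (h : Fin K → (Fin n → ℝ) → ℝ),
      (∀ k, IsTrigPoly s (h k)) ∧ ∀ x, g x - c = ∑ k, (h k x) ^ 2) : c ≤ bestSOS n s g := by
  refine le_csSup ⟨g 0, ?_⟩ h
  rintro c' ⟨K, h, -, hx⟩
  have := hx 0
  have := Finset.sum_nonneg (s := Finset.univ) fun k _ => sq_nonneg (h k 0)
  linarith

lemma abs_le_sum_norm {n : ℕ} {t : ℝ} {S : Finset (Fin n → ℤ)} {c : (Fin n → ℤ) → ℂ}
    {x : Fin n → ℝ} (ht : (t : ℂ) = ∑ k ∈ S, c k * trigChar k x) : |t| ≤ ∑ k ∈ S, ‖c k‖ := by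
  rw [← Real.norm_eq_abs, ← Complex.norm_real, ht]
  exact norm_sum_le_of_le _ fun k _ => by rw [norm_mul, norm_trigChar, mul_one]

lemma exists_lipschitz_eval (p : Polynomial ℂ) (a b : ℝ) :
    ∃ L : ℝ, 0 ≤ L ∧ ∀ ω ∈ Set.Icc a b, ∀ ω' ∈ Set.Icc a b,
      ‖p.eval (ω : ℂ) - p.eval (ω' : ℂ)‖ ≤ L * |ω - ω'| := by
  have hd : ContDiff ℝ 1 fun ω : ℝ => p.eval (ω : ℂ) :=
    (show ContDiff ℝ 1 fun z : ℂ => p.eval z by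
      simpa using (p.contDiff_aeval (R := ℂ) (𝕜 := ℂ) 1).restrict_scalars ℝ).comp
      Complex.ofRealCLM.contDiff
  obtain ⟨K, hK⟩ := hd.contDiffOn.exists_lipschitzOnWith one_ne_zero (convex_Icc a b) isCompact_Icc
  refine ⟨K, K.2, fun ω hω ω' hω' => ?_⟩
  simpa [dist_eq_norm] using hK.dist_le_mul ω hω ω' hω'

lemma exists_norm_eval_le (p : Polynomial ℂ) (a b : ℝ) :
    ∃ B : ℝ, 0 ≤ B ∧ ∀ ω ∈ Set.Icc a b, ‖p.eval (ω : ℂ)‖ ≤ B := by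
  obtain ⟨B, hB⟩ := isCompact_Icc (a := a) (b := b) |>.exists_bound_of_continuousOn
    (f := fun ω : ℝ => p.eval (ω : ℂ)) (by fun_prop)
  exact ⟨max B 0, le_max_right _ _, fun ω hω => (hB ω hω).trans (le_max_left _ _)⟩

/-- The left grid point of the cell containing `ω` lies in `[a, b]`, within one cell width. -/
lemma gridPt_floor {a b ω : ℝ} (hab : a < b) {sp : ℕ} (hsp : 1 ≤ sp) (hω : ω ∈ Set.Icc a b) :
    |ω - gridPt a b sp (min ⌊(ω - a) * sp / (b - a)⌋₊ (sp - 1))| ≤ (b - a) / sp := by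
  have hba : 0 < b - a := sub_pos.2 hab
  have hsp0 : (0 : ℝ) < sp := by exact_mod_cast hsp
  set t : ℝ := (ω - a) * sp / (b - a) with ht
  have ht0 : 0 ≤ t := div_nonneg (mul_nonneg (sub_nonneg.2 hω.1) hsp0.le) hba.le
  have ht1 : t ≤ sp := by
    rw [ht, div_le_iff₀ hba, mul_comm]
    exact mul_le_mul_of_nonneg_left (by linarith [hω.2]) hsp0.le
  have hωt : ω = a + t * (b - a) / sp := by
    rw [ht]
    field_simp
    ring
  have hfloor := Nat.floor_le ht0
  have hfloor' := Nat.lt_floor_add_one t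
  have key : |t - (min ⌊t⌋₊ (sp - 1) : ℕ)| ≤ 1 := by
    rw [abs_le]
    rcases le_total ⌊t⌋₊ (sp - 1) with h | h
    · rw [min_eq_left h]
      constructor <;> linarith
    · rw [min_eq_right h]
      have : ((sp - 1 : ℕ) : ℝ) ≤ ⌊t⌋₊ := by exact_mod_cast h
      rw [Nat.cast_sub hsp] at *
      push_cast at *
      constructor <;> linarith
  have hdiff : ω - gridPt a b sp (min ⌊t⌋₊ (sp - 1)) =
      (t - (min ⌊t⌋₊ (sp - 1) : ℕ)) * ((b - a) / sp) := by
    rw [gridPt, hωt]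
    ring
  rw [hdiff, abs_mul, abs_of_pos (div_pos hba hsp0)]
  exact mul_le_of_le_one_left (div_pos hba hsp0).le key

lemma gridPt_mem {a b : ℝ} (hab : a < b) {sp i : ℕ} (hi : i < sp) :
    gridPt a b sp i ∈ Set.Icc a b := by
  have hsp0 : (0 : ℝ) < sp := by exact_mod_cast (Nat.zero_le i).trans_lt hi
  have h1 : 0 ≤ (i : ℝ) * (b - a) / sp :=
    div_nonneg (mul_nonneg (Nat.cast_nonneg i) (sub_pos.2 hab).le) hsp0.le
  have h2 : (i : ℝ) * (b - a) / sp ≤ b - a := by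
    rw [div_le_iff₀ hsp0, mul_comm]
    exact mul_le_mul_of_nonneg_left (by exact_mod_cast hi.le) (sub_pos.2 hab).le
  exact ⟨by rw [gridPt]; linarith, by rw [gridPt]; linarith⟩

lemma integral_le_mul_of_le {F : ℝ → ℝ} {a b B : ℝ} (hab : a ≤ b) (hB : 0 ≤ B)
    (h : ∀ ω ∈ Set.Icc a b, F ω ≤ B) : ∫ ω in a..b, F ω ≤ B * (b - a) := by
  by_cases hF : IntervalIntegrable F volume a b
  · have := intervalIntegral.integral_mono_on hab hF intervalIntegrable_const h
    rwa [intervalIntegral.integral_const, smul_eq_mul, mul_comm] at this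
  · rw [intervalIntegral.integral_undef hF]
    exact mul_nonneg hB (sub_nonneg.2 hab)

/-- The relaxation factor is `O(1 / s²)`, uniformly over `s² > 6r²`. -/
lemma relaxation_factor_le (n r : ℕ) {s : ℕ} (hs : 6 * r ^ 2 < s ^ 2) :
    0 ≤ (1 - 6 * (r : ℝ) ^ 2 / (s : ℝ) ^ 2) ^ (-(n : ℤ)) - 1 ∧
    (1 - 6 * (r : ℝ) ^ 2 / (s : ℝ) ^ 2) ^ (-(n : ℤ)) - 1 ≤
      n * (6 * (r : ℝ) ^ 2 + 1) ^ (n + 2) / (s : ℝ) ^ 2 := by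
  set ρ : ℝ := 6 * (r : ℝ) ^ 2 with hρ
  set σ : ℝ := (s : ℝ) ^ 2 with hσ
  have hρ0 : 0 ≤ ρ := by positivity
  have hρσ : ρ + 1 ≤ σ := by
    rw [hρ, hσ]
    exact_mod_cast hs
  have hσ0 : 0 < σ := by linarith
  have hd : 0 < σ - ρ := by linarith
  set u : ℝ := (1 - ρ / σ)⁻¹ with hu
  have hu_eq : u = σ / (σ - ρ) := by
    rw [hu]
    field_simp
  have hu1 : u - 1 = ρ / (σ - ρ) := by
    rw [hu_eq]
    field_simp
    ring
  have hu_ge : 1 ≤ u := by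
    have : 0 ≤ ρ / (σ - ρ) := by positivity
    linarith
  have hu_sub : u - 1 ≤ (ρ + 1) ^ 2 / σ := by
    rw [hu1, div_le_div_iff₀ hd hσ0]
    nlinarith [mul_nonneg hρ0 (sub_nonneg.2 hρσ)]
  have hu_le : u ≤ ρ + 1 := by
    rw [hu_eq, div_le_iff₀ hd]
    nlinarith
  have hpow : (1 - ρ / σ) ^ (-(n : ℤ)) = u ^ n := by
    rw [zpow_neg, zpow_natCast, hu, inv_pow]
  rw [hpow]
  refine ⟨sub_nonneg.2 (one_le_pow₀ hu_ge), ?_⟩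
  have hgeom : u ^ n - 1 = (∑ i ∈ Finset.range n, u ^ i) * (u - 1) := (geom_sum_mul u n).symm
  have hsum : ∑ i ∈ Finset.range n, u ^ i ≤ n * (ρ + 1) ^ n := by
    have : ∀ i ∈ Finset.range n, u ^ i ≤ (ρ + 1) ^ n := fun i hi =>
      (pow_le_pow_right₀ hu_ge (Finset.mem_range.1 hi).le).trans
        (pow_le_pow_left₀ (by linarith) hu_le n)
    simpa using Finset.sum_le_card_nsmul _ _ _ this
  calc u ^ n - 1 ≤ (n * (ρ + 1) ^ n) * ((ρ + 1) ^ 2 / σ) := by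
        rw [hgeom]
        exact mul_le_mul hsum hu_sub (by linarith) (by positivity)
    _ = n * (ρ + 1) ^ (n + 2) / σ := by ring

/-- `O(1/s²)` convergence via a piecewise-constant lower bound. Let
`f(x, ω)` be, for each `ω ∈ [a, b]`, a real trigonometric polynomial of degree `≤ 2r` in `x`
whose Fourier coefficients are polynomial in `ω`. With `c*(ω) = inf_{x ∈ [0,1]ⁿ} f(x, ω)`
and the step function `c*_s` built from the best degree-`s` SOS bounds at `s_p` equidistant
grid points `ω_i`, there is `C > 0` with
`∫_a^b (c* − c*_s) ≤ max_i ‖f(·, ω_i) − f̄(·, ω_i)‖_F · [(1 − 6r²/s²)^{−n} − 1]·(b − a)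
+ C/s_p` whenever `s² > 6r²`; in particular, for `s_p ≥ s²` one gets `∫_a^b (c* − c*_s) ≤
C′/s²` for some `C′ > 0`. -/
theorem piecewise_constant_sos_convergence (n r : ℕ) (a b : ℝ) (hab : a < b)
    (f : (Fin n → ℝ) → ℝ → ℝ)
    (hf : ∃ (S : Finset (Fin n → ℤ)) (c : (Fin n → ℤ) → Polynomial ℂ),
      (∀ k ∈ S, ∀ i, |k i| ≤ (2 * r : ℤ)) ∧
      ∀ (x : Fin n → ℝ) (ω : ℝ),
        (f x ω : ℂ) = ∑ k ∈ S, Polynomial.eval (ω : ℂ) (c k) * trigChar k x) :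
    ∃ C : ℝ, 0 < C ∧
      (∀ s sp : ℕ, 6 * r ^ 2 < s ^ 2 → 1 ≤ sp →
        ∫ ω in a..b, (cstar n f ω - stepSOS n s f a b sp ω) ≤
          (⨆ i : Fin sp, Fnorm (fun x => f x (gridPt a b sp i) -
              ∫ y in Set.Icc (0 : Fin n → ℝ) 1, f y (gridPt a b sp i))) *
            ((1 - 6 * (r : ℝ) ^ 2 / (s : ℝ) ^ 2) ^ (-(n : ℤ)) - 1) * (b - a) + C / sp) ∧
      ∃ C' : ℝ, 0 < C' ∧
        ∀ s sp : ℕ, 6 * r ^ 2 < s ^ 2 → s ^ 2 ≤ sp →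
          ∫ ω in a..b, (cstar n f ω - stepSOS n s f a b sp ω) ≤ C' / s ^ 2 := by
  obtain ⟨S, c, hS, hfc⟩ := hf
  have hba : 0 < b - a := sub_pos.2 hab
  choose L hL0 hL using fun k => exists_lipschitz_eval (c k) a b
  choose B hB0 hB using fun k => exists_norm_eval_le (c k) a b
  have hbdd (ω : ℝ) : BddBelow ((fun x => f x ω) '' Set.Icc (0 : Fin n → ℝ) 1) := by
    refine ⟨-∑ k ∈ S, ‖(c k).eval (ω : ℂ)‖, ?_⟩
    rintro _ ⟨x, -, rfl⟩
    exact (abs_le.1 (abs_le_sum_norm (hfc x ω))).1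
  have hcstar (ω : ℝ) : ∀ x ∈ Set.Icc (0 : Fin n → ℝ) 1, cstar n f ω ≤ f x ω :=
    fun x hx => csInf_le (hbdd ω) ⟨x, hx, rfl⟩
  have hlip : ∀ ω ∈ Set.Icc a b, ∀ ω' ∈ Set.Icc a b,
      cstar n f ω - (∑ k ∈ S, L k) * |ω - ω'| ≤ cstar n f ω' := by
    intro ω hω ω' hω'
    refine le_csInf ⟨_, 0, ⟨le_rfl, zero_le_one⟩, rfl⟩ ?_
    rintro _ ⟨x, hx, rfl⟩
    have h1 : ((f x ω - f x ω' : ℝ) : ℂ) =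
        ∑ k ∈ S, ((c k).eval (ω : ℂ) - (c k).eval (ω' : ℂ)) * trigChar k x := by
      push_cast
      rw [hfc, hfc, ← Finset.sum_sub_distrib]
      exact Finset.sum_congr rfl fun k _ => (sub_mul _ _ _).symm
    have h2 : |f x ω - f x ω'| ≤ (∑ k ∈ S, L k) * |ω - ω'| := by
      rw [Finset.sum_mul]
      exact (abs_le_sum_norm h1).trans (Finset.sum_le_sum fun k _ => hL k ω hω ω' hω')
    have := (abs_le.1 h2).2
    have := hcstar ω x hx
    simp only
    linarith
  set Λ : ℝ := ∑ k ∈ S, L k with hΛ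
  have hΛ0 : 0 ≤ Λ := Finset.sum_nonneg fun k _ => hL0 k
  set φ : ℝ → ℝ := fun ω => Fnorm (fun x => f x ω - ∫ y in Set.Icc (0 : Fin n → ℝ) 1, f y ω)
    with hφ
  have hφ_eq (ω : ℝ) : φ ω = ∑ k ∈ S.erase 0, ‖(c k).eval (ω : ℂ)‖ :=
    Fnorm_sub_integral fun x => hfc x ω
  have hφ0 (ω : ℝ) : 0 ≤ φ ω := by
    rw [hφ_eq]
    positivity
  set β : ℝ := ∑ k ∈ S.erase 0, B k with hβ
  have hβ0 : 0 ≤ β := Finset.sum_nonneg fun k _ => hB0 k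
  have hφ_le : ∀ ω ∈ Set.Icc a b, φ ω ≤ β := fun ω hω => by
    rw [hφ_eq]
    exact Finset.sum_le_sum fun k _ => hB k ω hω
  have main : ∀ s sp : ℕ, 6 * r ^ 2 < s ^ 2 → 1 ≤ sp →
      ∫ ω in a..b, (cstar n f ω - stepSOS n s f a b sp ω) ≤
        (⨆ i : Fin sp, φ (gridPt a b sp i)) *
          ((1 - 6 * (r : ℝ) ^ 2 / (s : ℝ) ^ 2) ^ (-(n : ℤ)) - 1) * (b - a) +
        (Λ * (b - a) ^ 2 + 1) / sp := by
    intro s sp hs hsp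
    have hsp0 : (0 : ℝ) < sp := by exact_mod_cast hsp
    set M : ℝ := (1 - 6 * (r : ℝ) ^ 2 / (s : ℝ) ^ 2) ^ (-(n : ℤ)) - 1 with hM
    have hM0 : 0 ≤ M := (relaxation_factor_le n r hs).1
    have hsup0 : 0 ≤ ⨆ i : Fin sp, φ (gridPt a b sp i) := Real.iSup_nonneg fun i => hφ0 _
    have hpt : ∀ ω ∈ Set.Icc a b, cstar n f ω - stepSOS n s f a b sp ω ≤
        (⨆ i : Fin sp, φ (gridPt a b sp i)) * M + Λ * ((b - a) / sp) := by
      intro ω hω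
      have hdist := gridPt_floor hab hsp hω
      rw [stepSOS]
      set i : ℕ := min ⌊(ω - a) * sp / (b - a)⌋₊ (sp - 1) with hi
      have hi_lt : i < sp := (min_le_right _ _).trans_lt (by omega)
      have h1 := hlip ω hω _ (gridPt_mem hab hi_lt)
      have h2 := le_bestSOS (exists_sum_sq_eq_sub hS (fun x => hfc x (gridPt a b sp i)) hs
        (hcstar (gridPt a b sp i)))
      rw [← hφ_eq, ← hM] at h2
      have h3 : φ (gridPt a b sp i) ≤ ⨆ i : Fin sp, φ (gridPt a b sp i) :=
        le_ciSup (f := fun i : Fin sp => φ (gridPt a b sp i)) (Set.finite_range _).bddAbove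
          ⟨i, hi_lt⟩
      have h4 := mul_le_mul_of_nonneg_right h3 hM0
      have h5 := mul_le_mul_of_nonneg_left hdist hΛ0
      linarith
    refine (integral_le_mul_of_le hab.le (by positivity) hpt).trans ?_
    have : (Λ * (b - a) ^ 2 + 1) / sp = Λ * ((b - a) / sp) * (b - a) + 1 / sp := by ring
    rw [this]
    have : (0 : ℝ) ≤ 1 / sp := by positivity
    linarith
  refine ⟨Λ * (b - a) ^ 2 + 1, by positivity, main,
    β * (n * (6 * (r : ℝ) ^ 2 + 1) ^ (n + 2)) * (b - a) + (Λ * (b - a) ^ 2 + 1), by positivity,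
    fun s sp hs hssp => ?_⟩
  have hs2 : 0 < s ^ 2 := (Nat.zero_le _).trans_lt hs
  have hs2' : (0 : ℝ) < (s : ℝ) ^ 2 := by exact_mod_cast hs2
  have hsp : 1 ≤ sp := hs2.trans_le hssp
  have : Nonempty (Fin sp) := ⟨⟨0, hsp⟩⟩
  refine (main s sp hs hsp).trans ?_
  obtain ⟨hM0, hM⟩ := relaxation_factor_le n r hs
  have hsup : ⨆ i : Fin sp, φ (gridPt a b sp i) ≤ β :=
    ciSup_le fun i => hφ_le _ (gridPt_mem hab i.2)
  have h1 := mul_le_mul_of_nonneg_right (mul_le_mul hsup hM hM0 hβ0) hba.le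
  have h2 : (Λ * (b - a) ^ 2 + 1) / sp ≤ (Λ * (b - a) ^ 2 + 1) / (s : ℝ) ^ 2 :=
    div_le_div_of_nonneg_left (by positivity) hs2' (by exact_mod_cast hssp)
  refine (add_le_add h1 h2).trans (le_of_eq ?_)
  ring
end
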